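/- arXiv:2503.18436 — 2 statements merged into one kernel-verified Lean document; each statement's English description precedes it below -/
import Mathlib

section
/- Let ‖·‖ be a norm on ℝ^n, κ > 0, ε ∈ [0, 1], and let N(x, y) = ‖x‖ + κ|y| denote the associated norm on ℝ^n × ℝ with dual norm N_*. Let Ξ = {(x, y) ∈ ℝ^n × ℝ : C₁x + c₂y ≤ d} with C₁ ∈ ℝ^{r×n}, c₂, d ∈ ℝ^r, and assume there is a Slater point (x_S, y_S) with C₁x_S + c₂y_S < d. Fix data (x̂_i, ŷ_i) ∈ Ξ for i = 1, …, N. Then for (λ, α, w) ∈ ℝ₊ × ℝ^N × ℝ^n the following are equivalent: (a) for every i, sup_{(x,y) ∈ Ξ} [max{−ε(⟨w, x⟩ − y), (1 − ε)(⟨w, x⟩ − y)} − λ·(‖x − x̂_i‖ + κ|y − ŷ_i|)] ≤ α_i; (b) α ∈ ℝ₊^N and for every i there exist φ_i⁺, φ_i⁻ ∈ ℝ₊^r with: ε·(ŷ_i − ⟨w, x̂_i⟩) + ⟨φ_i⁺, d − C₁x̂_i − c₂ŷ_i⟩ ≤ α_i; (1 − ε)·(⟨w, x̂_i⟩ − ŷ_i)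 + ⟨φ_i⁻, d − C₁x̂_i − c₂ŷ_i⟩ ≤ α_i; N_*(C₁ᵀφ_i⁺ + ε·w, c₂ᵀφ_i⁺ − ε) ≤ λ; and N_*(C₁ᵀφ_i⁻ − (1 − ε)·w, c₂ᵀφ_i⁻ + 1 − ε) ≤ λ. -/
/-!
The pinball loss is nonnegative, so evaluating the robust constraint at a data point gives
`0 ≤ α i`. Each of the two slopes of the loss then leads to a convex program: maximize a linear
functional minus a multiple of a norm distance over a polyhedron. Under Slater's condition, `α i`
bounds its value exactly when there are multipliers for which `α i` bounds the Lagrangian on the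
whole space. As a function of the displacement from the data point, `α i` minus the Lagrangian is a
constant plus a positively homogeneous function, hence nonnegative exactly when both parts are: the
constant part gives the scalar inequality for `α i`, the homogeneous part the dual norm bound.
-/

theorem nonneg_of_forall_pos_nonneg_add_mul {𝕜 : Type*} [Field 𝕜] [LinearOrder 𝕜]
    [IsStrictOrderedRing 𝕜] {a b : 𝕜} (h : ∀ t > 0, 0 ≤ a + t * b) : 0 ≤ b := by
  by_contra! hb
  obtain ⟨t, ht, hlt⟩ := exists_pos_lt_mul (neg_pos.2 hb) a
  linarith [h t ht]

theorem exists_forall_pos_sum_mul_of_convex_of_isOpen {ι : Type*} [Fintype ι]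
    {A : Set (ι → ℝ)} (hA : Convex ℝ A) (hA_open : IsOpen A) (hzero : 0 ∉ A) :
    ∃ μ : ι → ℝ, ∀ v ∈ A, 0 < ∑ j, μ j * v j := by
  classical
  obtain ⟨F, hF⟩ := geometric_hahn_banach_point_open hA hA_open hzero
  obtain ⟨μ, hμ⟩ := (dotProductEquiv ℝ ι).surjective F.toLinearMap
  refine ⟨μ, fun v hv => ?_⟩
  calc 0 = F 0 := (map_zero F).symm
    _ < F v := hF v hv
    _ = ∑ j, μ j * v j := (LinearMap.congr_fun hμ v).symm

/-- The image of the strict epigraph of a family `h` of functions on `S`: the vectors that lie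
strictly above `(h j x)ⱼ` in every coordinate, for a common point `x` of `S`. The system `h j x < 0`
has no solution in `S` exactly when this set misses the origin. -/
def strictUpperImage {E ι : Type*} (S : Set E) (h : ι → E → ℝ) : Set (ι → ℝ) :=
  {v | ∃ x ∈ S, ∀ j, h j x < v j}

section strictUpperImage

variable {E ι : Type*} {S : Set E} {h : ι → E → ℝ}

theorem isOpen_strictUpperImage [Finite ι] : IsOpen (strictUpperImage S h) := by
  have hUnion : strictUpperImage S h = ⋃ x ∈ S, ⋂ j, {v | h j x < v j} := by
    ext v
    simp [strictUpperImage]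
  rw [hUnion]
  exact isOpen_biUnion fun x _ => isOpen_iInter_of_finite fun j =>
    isOpen_lt continuous_const (continuous_apply j)

theorem convex_strictUpperImage [AddCommGroup E] [Module ℝ E] (hS : Convex ℝ S)
    (hh : ∀ j, ConvexOn ℝ S (h j)) : Convex ℝ (strictUpperImage S h) := by
  rw [convex_iff_forall_pos]
  rintro v ⟨x, hx, hxv⟩ w ⟨y, hy, hyw⟩ a b ha hb hab
  refine ⟨a • x + b • y, hS hx hy ha.le hb.le hab, fun j => ?_⟩
  calc h j (a • x + b • y) ≤ a * h j x + b * h j y := (hh j).2 hx hy ha.le hb.le hab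
    _ < a * v j + b * w j := by gcongr <;> [exact hxv j; exact hyw j]

theorem add_mem_strictUpperImage {v w : ι → ℝ} (hv : v ∈ strictUpperImage S h) (hw : 0 ≤ w) :
    v + w ∈ strictUpperImage S h := by
  obtain ⟨x, hx, hxv⟩ := hv
  exact ⟨x, hx, fun j => (hxv j).trans_le (le_add_of_nonneg_right (hw j))⟩

theorem strictUpperImage_nonempty (hS : S.Nonempty) : (strictUpperImage S h).Nonempty :=
  hS.elim fun x hx => ⟨fun j => h j x + 1, x, hx, fun _ => lt_add_one _⟩

variable [Fintype ι] {μ : ι → ℝ}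

theorem nonneg_of_forall_strictUpperImage_sum_mul_pos (hS : S.Nonempty)
    (hμ : ∀ v ∈ strictUpperImage S h, 0 < ∑ j, μ j * v j) : 0 ≤ μ := by
  classical
  obtain ⟨v, hv⟩ := strictUpperImage_nonempty (h := h) hS
  refine fun j => nonneg_of_forall_pos_nonneg_add_mul (a := ∑ k, μ k * v k) fun t ht => ?_
  have hmem := add_mem_strictUpperImage hv (Pi.single_nonneg (i := j).2 ht.le)
  simpa [mul_add, Finset.sum_add_distrib, Pi.single_apply, mul_comm t] using (hμ _ hmem).le

theorem sum_mul_nonneg_of_forall_strictUpperImage_sum_mul_pos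
    (hμ : ∀ v ∈ strictUpperImage S h, 0 < ∑ j, μ j * v j) {x : E} (hx : x ∈ S) :
    0 ≤ ∑ j, μ j * h j x := by
  have hlim : Filter.Tendsto (fun η => ∑ j, μ j * (h j x + η)) (nhdsWithin 0 (Set.Ioi 0))
      (nhds (∑ j, μ j * h j x)) :=
    tendsto_nhdsWithin_of_tendsto_nhds <| Continuous.tendsto' (by fun_prop) _ _ (by simp)
  refine ge_of_tendsto hlim (eventually_mem_nhdsWithin.mono fun η hη => (hμ _ ?_).le)
  exact ⟨x, hx, fun j => lt_add_of_pos_right _ hη⟩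

end strictUpperImage

section ConvexSystems

variable {E ι : Type*} [AddCommGroup E] [Module ℝ E] [Fintype ι] {S : Set E}

/-- The Fan–Glicksberg–Hoffman theorem of the alternative. -/
theorem exists_multipliers_of_infeasible {h : ι → E → ℝ} (hS : S.Nonempty)
    (hh : ∀ j, ConvexOn ℝ S (h j)) (hinfeasible : ∀ x ∈ S, ∃ j, 0 ≤ h j x) :
    ∃ μ : ι → ℝ, 0 ≤ μ ∧ μ ≠ 0 ∧ ∀ x ∈ S, 0 ≤ ∑ j, μ j * h j x := by
  have hS_convex : Convex ℝ S := by
    obtain ⟨x, hx⟩ := hS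
    obtain ⟨j, -⟩ := hinfeasible x hx
    exact (hh j).1
  have hzero : 0 ∉ strictUpperImage S h := fun ⟨x, hx, hneg⟩ =>
    let ⟨j, hj⟩ := hinfeasible x hx
    (hneg j).not_ge hj
  obtain ⟨μ, hμ⟩ := exists_forall_pos_sum_mul_of_convex_of_isOpen
    (convex_strictUpperImage hS_convex hh) isOpen_strictUpperImage hzero
  refine ⟨μ, nonneg_of_forall_strictUpperImage_sum_mul_pos hS hμ, ?_,
    fun x hx => sum_mul_nonneg_of_forall_strictUpperImage_sum_mul_pos hμ hx⟩
  rintro rfl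
  obtain ⟨v, hv⟩ := strictUpperImage_nonempty (h := h) hS
  simpa using hμ v hv

variable {f : E → ℝ} {g : ι → E → ℝ}

theorem exists_lagrange_multipliers_of_slater (hf : ConvexOn ℝ S f)
    (hg : ∀ k, ConvexOn ℝ S (g k)) {s : E} (hsS : s ∈ S) (hs : ∀ k, g k s < 0)
    (h : ∀ x ∈ S, (∀ k, g k x ≤ 0) → 0 ≤ f x) :
    ∃ φ : ι → ℝ, 0 ≤ φ ∧ ∀ x ∈ S, 0 ≤ f x + ∑ k, φ k * g k x := by
  obtain ⟨μ, hμ, hμ_ne, hL⟩ := exists_multipliers_of_infeasible (ι := Option ι)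
    (h := fun j => j.elim f g) ⟨s, hsS⟩ (Option.rec hf hg) fun x hx => by
      by_contra! hneg
      exact (hneg none).not_ge (h x hx fun k => (hneg (some k)).le)
  simp only [Fintype.sum_option, Option.elim_none, Option.elim_some] at hL
  -- If the multiplier of `f` vanished, the Slater point would force all the others to vanish.
  have hμ_none : 0 < μ none := by
    refine (hμ none).lt_of_ne' fun hnone => hμ_ne ?_
    have hterm (k : ι) : μ (some k) * g k s ≤ 0 :=
      mul_nonpos_of_nonneg_of_nonpos (hμ (some k)) (hs k).le
    have hsum : ∑ k, μ (some k) * g k s = 0 :=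
      (Finset.sum_nonpos fun k _ => hterm k).antisymm (by simpa [hnone] using hL s hsS)
    rw [Finset.sum_eq_zero_iff_of_nonpos fun k _ => hterm k] at hsum
    ext (_ | k)
    · exact hnone
    · exact (mul_eq_zero.1 (hsum k (Finset.mem_univ k))).resolve_right (hs k).ne
  refine ⟨fun k => μ (some k) / μ none, fun k => div_nonneg (hμ _) (hμ _), fun x hx => ?_⟩
  calc 0 ≤ (μ none * f x + ∑ k, μ (some k) * g k x) / μ none :=
        div_nonneg (hL x hx) hμ_none.le
    _ = f x + ∑ k, μ (some k) / μ none * g k x := by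
      rw [add_div, mul_div_cancel_left₀ _ hμ_none.ne', Finset.sum_div]
      simp only [div_mul_eq_mul_div]

theorem forall_nonneg_iff_exists_lagrange_multipliers (hf : ConvexOn ℝ S f)
    (hg : ∀ k, ConvexOn ℝ S (g k)) {s : E} (hsS : s ∈ S) (hs : ∀ k, g k s < 0) :
    (∀ x ∈ S, (∀ k, g k x ≤ 0) → 0 ≤ f x) ↔
      ∃ φ : ι → ℝ, 0 ≤ φ ∧ ∀ x ∈ S, 0 ≤ f x + ∑ k, φ k * g k x := by
  refine ⟨exists_lagrange_multipliers_of_slater hf hg hsS hs, ?_⟩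
  rintro ⟨φ, hφ, hL⟩ x hx hgx
  have hpenalty : ∑ k, φ k * g k x ≤ 0 :=
    Finset.sum_nonpos fun k _ => mul_nonpos_of_nonneg_of_nonpos (hφ k) (hgx k)
  linarith [hL x hx]

end ConvexSystems

section Seminorm

variable {V : Type*} [AddCommGroup V] [Module ℝ V] (p : Seminorm ℝ V)

theorem forall_le_add_mul_seminorm_iff (f : V →ₗ[ℝ] ℝ) (b lam : ℝ) :
    (∀ u, f u ≤ b + lam * p u) ↔ 0 ≤ b ∧ ∀ u, f u ≤ lam * p u := by
  refine ⟨fun h => ⟨by simpa using h 0, fun u => ?_⟩, fun ⟨hb, h⟩ u =>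
    (h u).trans (le_add_of_nonneg_left hb)⟩
  refine sub_nonneg.1 (nonneg_of_forall_pos_nonneg_add_mul (a := b) fun t ht => ?_)
  have htu := h (t • u)
  rw [map_smul, map_smul_eq_mul, Real.norm_of_nonneg ht.le, smul_eq_mul] at htu
  linarith

theorem forall_le_of_seminorm_le_one_iff (f : V →ₗ[ℝ] ℝ) {lam : ℝ} (hlam : 0 ≤ lam) :
    (∀ u, p u ≤ 1 → f u ≤ lam) ↔ ∀ u, f u ≤ lam * p u := by
  refine ⟨fun h u => ?_, fun h u hu => (h u).trans (mul_le_of_le_one_right hlam hu)⟩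
  rcases (apply_nonneg p u).eq_or_lt' with hpu | hpu
  · have hray (t : ℝ) : 0 ≤ lam + t * -f u := by
      simpa using h (t • u) (by simp [map_smul_eq_mul, hpu])
    simpa [hpu] using nonneg_of_forall_pos_nonneg_add_mul fun t _ => hray t
  · have hunit := h ((p u)⁻¹ • u) (by
      rw [map_smul_eq_mul, Real.norm_of_nonneg (inv_nonneg.2 hpu.le), inv_mul_cancel₀ hpu.ne'])
    rwa [map_smul, smul_eq_mul, inv_mul_le_iff₀ hpu, mul_comm] at hunit

theorem isLUB_unitBall_le_iff (f : V →ₗ[ℝ] ℝ) {b lam : ℝ} (hlam : 0 ≤ lam)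
    (hb : IsLUB {ρ | ∃ u, p u ≤ 1 ∧ ρ = f u} b) : b ≤ lam ↔ ∀ u, f u ≤ lam * p u := by
  rw [isLUB_le_iff hb, ← forall_le_of_seminorm_le_one_iff p f hlam]
  exact ⟨fun h u hu => h ⟨u, hu, rfl⟩, fun h _ ⟨u, hu, hρ⟩ => hρ ▸ h u hu⟩

theorem forall_polyhedron_sub_mul_seminorm_le_iff {κ : Type*} [Fintype κ] (f : V →ₗ[ℝ] ℝ)
    (C : κ → V →ₗ[ℝ] ℝ) (d : κ → ℝ) {s : V} (hs : ∀ k, C k s < d k) (z : V)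
    {lam : ℝ} (hlam : 0 ≤ lam) (a : ℝ) :
    (∀ x, (∀ k, C k x ≤ d k) → f x - lam * p (x - z) ≤ a) ↔
      ∃ φ : κ → ℝ, 0 ≤ φ ∧ f z + ∑ k, φ k * (d k - C k z) ≤ a ∧
        ∀ u, ∑ k, φ k * C k u - f u ≤ lam * p u := by
  have hobj : ConvexOn ℝ Set.univ fun x => a - (f x - lam * p (x - z)) := by
    have hp : ConvexOn ℝ Set.univ fun x => p (x - z) := by
      simpa [sub_eq_neg_add, Function.comp_def] using p.convexOn.translate_right (-z)
    exact (convexOn_const a convex_univ).sub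
      ((f.concaveOn convex_univ).sub (hp.smul hlam))
  have hconstr (k : κ) : ConvexOn ℝ Set.univ fun x => C k x - d k :=
    ((C k).convexOn convex_univ).sub (concaveOn_const (d k) convex_univ)
  have hlagrange := forall_nonneg_iff_exists_lagrange_multipliers hobj hconstr (Set.mem_univ s)
    fun k => sub_neg.2 (hs k)
  simp only [Set.mem_univ, true_imp_iff, sub_nonneg, sub_nonpos] at hlagrange
  refine hlagrange.trans (exists_congr fun φ => and_congr_right fun _ => ?_)
  let L : V →ₗ[ℝ] ℝ := ∑ k, φ k • C k - f
  have hL (u : V) : L u = ∑ k, φ k * C k u - f u := by simp [L]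
  have hexpand (u : V) :
      a - (f (z - u) - lam * p (z - u - z)) + ∑ k, φ k * (C k (z - u) - d k) =
        (a - (f z + ∑ k, φ k * (d k - C k z))) + lam * p u - L u := by
    simp only [hL, sub_sub_cancel_left, map_neg_eq_map, map_sub, mul_sub, Finset.sum_sub_distrib]
    ring
  rw [← (Equiv.subLeft z).forall_congr_right]
  simp only [Equiv.subLeft_apply, hexpand, sub_nonneg]
  rw [forall_le_add_mul_seminorm_iff, sub_nonneg]
  simp only [hL]

end Seminorm

theorem max_mul_nonneg_of_nonpos_of_nonneg {𝕜 : Type*} [Ring 𝕜] [LinearOrder 𝕜]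
    [IsOrderedRing 𝕜] {a b : 𝕜} (ha : a ≤ 0) (hb : 0 ≤ b) (t : 𝕜) : 0 ≤ max (a * t) (b * t) := by
  rcases le_total 0 t with ht | ht
  · exact le_max_of_le_right (mul_nonneg hb ht)
  · exact le_max_of_le_left (mul_nonneg_of_nonpos_of_nonpos ha ht)

/-- The residual `⟨w, x⟩ - y` of the regression becomes an arbitrary linear functional `f` of the
data point, and the dual norm bound `N_*(g) ≤ lam` is written `∀ u, g u ≤ lam * p u`, since the
dual norm may be infinite on a space that is not finite-dimensional. -/
theorem drfl_quantile_regression_omega_general {V ι κ : Type*} [AddCommGroup V] [Module ℝ V]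
    [Fintype κ] (p : Seminorm ℝ V) (f : V →ₗ[ℝ] ℝ) {a b : ℝ} (ha : a ≤ 0) (hb : 0 ≤ b)
    (C : κ → V →ₗ[ℝ] ℝ) (d : κ → ℝ) {s : V} (hs : ∀ k, C k s < d k)
    (z : ι → V) (hz : ∀ i k, C k (z i) ≤ d k) {lam : ℝ} (hlam : 0 ≤ lam) (α : ι → ℝ) :
    (∀ i u, (∀ k, C k u ≤ d k) → max (a * f u) (b * f u) - lam * p (u - z i) ≤ α i) ↔
      (∀ i, 0 ≤ α i) ∧ ∀ i, ∃ φ ψ : κ → ℝ, (∀ k, 0 ≤ φ k) ∧ (∀ k, 0 ≤ ψ k) ∧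
        a * f (z i) + ∑ k, φ k * (d k - C k (z i)) ≤ α i ∧
        b * f (z i) + ∑ k, ψ k * (d k - C k (z i)) ≤ α i ∧
        (∀ u, ∑ k, φ k * C k u - a * f u ≤ lam * p u) ∧
        ∀ u, ∑ k, ψ k * C k u - b * f u ≤ lam * p u := by
  have hslope (c : ℝ) (i : ι) :
      (∀ u, (∀ k, C k u ≤ d k) → c * f u - lam * p (u - z i) ≤ α i) ↔ ∃ φ : κ → ℝ, 0 ≤ φ ∧
        c * f (z i) + ∑ k, φ k * (d k - C k (z i)) ≤ α i ∧
        ∀ u, ∑ k, φ k * C k u - c * f u ≤ lam * p u :=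
    forall_polyhedron_sub_mul_seminorm_le_iff p (c • f) C d hs (z i) hlam (α i)
  have hsplit (i : ι) :
      (∀ u, (∀ k, C k u ≤ d k) → max (a * f u) (b * f u) - lam * p (u - z i) ≤ α i) ↔
        (∀ u, (∀ k, C k u ≤ d k) → a * f u - lam * p (u - z i) ≤ α i) ∧
        ∀ u, (∀ k, C k u ≤ d k) → b * f u - lam * p (u - z i) ≤ α i := by
    simp only [sub_le_iff_le_add, max_le_iff, imp_and, forall_and]
  have hα (h : ∀ i u, (∀ k, C k u ≤ d k) →
      max (a * f u) (b * f u) - lam * p (u - z i) ≤ α i) (i : ι) : 0 ≤ α i := by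
    have hdata := h i (z i) (hz i)
    rw [sub_self, map_zero, mul_zero, sub_zero] at hdata
    exact (max_mul_nonneg_of_nonpos_of_nonneg ha hb _).trans hdata
  rw [← and_iff_right_of_imp hα]
  refine and_congr_right fun _ => forall_congr' fun i => ?_
  rw [hsplit, hslope, hslope]
  constructor
  · rintro ⟨⟨φ, hφ, hφα, hφ_dual⟩, ψ, hψ, hψα, hψ_dual⟩
    exact ⟨φ, ψ, hφ, hψ, hφα, hψα, hφ_dual, hψ_dual⟩
  · rintro ⟨φ, ψ, hφ, hψ, hφα, hψα, hφ_dual, hψ_dual⟩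
    exact ⟨⟨φ, hφ, hφα, hφ_dual⟩, ψ, hψ, hψα, hψ_dual⟩

/-- The norm `(x, y) ↦ q x + κ * |y|` on feature-label pairs, which induces the transport cost of
distributionally robust regression. -/
noncomputable def regressionSeminorm {E : Type*} [AddCommGroup E] [Module ℝ E] (q : Seminorm ℝ E)
    (κ : NNReal) : Seminorm ℝ (E × ℝ) :=
  q.comp (LinearMap.fst ℝ E ℝ) + κ • (normSeminorm ℝ ℝ).comp (LinearMap.snd ℝ E ℝ)

/-- The standard bilinear pairing on `ℝⁿ × ℝ`, identifying this space with its dual. -/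
noncomputable def coordPairing {n : Type*} [Fintype n] :
    ((n → ℝ) × ℝ) →ₗ[ℝ] ((n → ℝ) × ℝ) →ₗ[ℝ] ℝ :=
  (dotProductBilin ℝ ℝ).compl₁₂ (LinearMap.fst ℝ _ ℝ) (LinearMap.fst ℝ _ ℝ) +
    (LinearMap.mul ℝ ℝ).compl₁₂ (LinearMap.snd ℝ _ ℝ) (LinearMap.snd ℝ _ ℝ)

theorem coordPairing_apply {n : Type*} [Fintype n] (v u : (n → ℝ) × ℝ) :
    coordPairing v u = (∑ j, v.1 j * u.1 j) + v.2 * u.2 :=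
  rfl

theorem coordPairing_sum_mul_sub {n κ : Type*} [Fintype n] [Fintype κ] (A : κ → n → ℝ)
    (b φ : κ → ℝ) (c : ℝ) (w : n → ℝ) (u : (n → ℝ) × ℝ) :
    coordPairing (fun j => (∑ k, A k j * φ k) - c * w j, (∑ k, b k * φ k) + c) u =
      ∑ k, φ k * coordPairing (A k, b k) u - c * coordPairing (w, -1) u := by
  have hvec : (fun j => (∑ k, A k j * φ k) - c * w j, (∑ k, b k * φ k) + c) =
      ∑ k, φ k • (A k, b k) - c • (w, (-1 : ℝ)) := by
    ext <;> simp [Prod.fst_sum, Prod.snd_sum, mul_comm]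
  simp only [hvec, map_sub, map_sum, map_smul, LinearMap.sub_apply, LinearMap.sum_apply,
    LinearMap.smul_apply, smul_eq_mul]

/-- Corollary (Quantile Regression) of the paper: characterization of `(λ, α, w) ∈ Ω_s` for
distributionally robust quantile regression with the pinball loss
`L(z) = max{−εz, (1 − ε)z}`, polyhedral support set `Ξ = {(x, y) : C₁x + c₂y ≤ d}` admitting
a Slater point, and regression transport cost `d_R((x,y),(x',y')) = ‖x − x'‖ + κ|y − y'|`.
Here `nn` is a norm on `ℝ^n` and `dN` is the dual norm of the norm `N(x, y) = nn x + κ|y|`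
on `ℝ^n × ℝ`. -/
theorem drfl_quantile_regression_omega
    (n N r : ℕ) (κ ε : ℝ) (hκ : 0 < κ) (hε₀ : 0 ≤ ε) (hε₁ : ε ≤ 1)
    (nn : (Fin n → ℝ) → ℝ)
    (hnn_nonneg : ∀ x, 0 ≤ nn x)
    (hnn_def : ∀ x, nn x = 0 ↔ x = 0)
    (hnn_add : ∀ x y, nn (x + y) ≤ nn x + nn y)
    (hnn_smul : ∀ (c : ℝ) x, nn (c • x) = |c| * nn x)
    (dN : ((Fin n → ℝ) × ℝ) → ℝ)
    (hdN : ∀ v : (Fin n → ℝ) × ℝ, IsLUB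
      {ρ : ℝ | ∃ u : (Fin n → ℝ) × ℝ, nn u.1 + κ * |u.2| ≤ 1 ∧
        ρ = (∑ j, v.1 j * u.1 j) + v.2 * u.2} (dN v))
    (C₁ : Fin r → Fin n → ℝ) (c₂ d : Fin r → ℝ)
    (xS : Fin n → ℝ) (yS : ℝ)
    (hSlater : ∀ k, (∑ j, C₁ k j * xS j) + c₂ k * yS < d k)
    (xhat : Fin N → Fin n → ℝ) (yhat : Fin N → ℝ)
    (hdata : ∀ i k, (∑ j, C₁ k j * xhat i j) + c₂ k * yhat i ≤ d k)
    (lam : ℝ) (hlam : 0 ≤ lam) (α : Fin N → ℝ) (w : Fin n → ℝ) :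
    (∀ i, ∀ (x : Fin n → ℝ) (y : ℝ),
        (∀ k, (∑ j, C₁ k j * x j) + c₂ k * y ≤ d k) →
        max (-ε * ((∑ j, w j * x j) - y)) ((1 - ε) * ((∑ j, w j * x j) - y))
          - lam * (nn (x - xhat i) + κ * |y - yhat i|) ≤ α i)
    ↔
    ((∀ i, 0 ≤ α i) ∧ ∀ i, ∃ φp φm : Fin r → ℝ,
      (∀ k, 0 ≤ φp k) ∧ (∀ k, 0 ≤ φm k) ∧
      ε * (yhat i - (∑ j, w j * xhat i j)) +
        (∑ k, φp k * (d k - (∑ j, C₁ k j * xhat i j) - c₂ k * yhat i)) ≤ α i ∧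
      (1 - ε) * ((∑ j, w j * xhat i j) - yhat i) +
        (∑ k, φm k * (d k - (∑ j, C₁ k j * xhat i j) - c₂ k * yhat i)) ≤ α i ∧
      dN (fun j => (∑ k, C₁ k j * φp k) + ε * w j, (∑ k, c₂ k * φp k) - ε) ≤ lam ∧
      dN (fun j => (∑ k, C₁ k j * φm k) - (1 - ε) * w j,
        (∑ k, c₂ k * φm k) + 1 - ε) ≤ lam) := by
  let p := regressionSeminorm (Seminorm.of nn hnn_add hnn_smul) ⟨κ, hκ.le⟩
  have hp (x y) : p (x, y) = nn x + κ * |y| := rfl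
  have hdual (v) : dN v ≤ lam ↔ ∀ u, coordPairing v u ≤ lam * p u :=
    isLUB_unitBall_le_iff p (coordPairing v) hlam (hdN v)
  have hloss (i) : ε * (yhat i - ∑ j, w j * xhat i j) = -ε * (∑ j, w j * xhat i j - yhat i) := by
    ring
  have hrobust := drfl_quantile_regression_omega_general p (coordPairing (w, -1))
    (neg_nonpos.2 hε₀) (sub_nonneg.2 hε₁) (fun k => coordPairing (C₁ k, c₂ k)) d
    (s := (xS, yS)) hSlater (fun i => (xhat i, yhat i)) hdata hlam α
  simp only [← coordPairing_sum_mul_sub, ← hdual] at hrobust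
  simpa only [Prod.forall, Prod.mk_sub_mk, hp, hloss, coordPairing_apply, neg_mul, one_mul,
    sub_neg_eq_add, ← sub_eq_add_neg, add_sub_assoc, sub_sub] using hrobust
end

section
/- Let ‖·‖ be a norm on ℝ^n with dual norm ‖·‖_*, let κ > 0, and let X = {x ∈ ℝ^n : 0 ≤ x ≤ e}, where e is the all-ones vector. Fix data x̂_i ∈ X and labels ŷ_i ∈ {−1, +1} for i = 1, …, N. Then for (λ, α, w) ∈ ℝ₊ × ℝ^N × ℝ^n the following are equivalent: (a) for every i, sup over x ∈ X and y ∈ {−1, +1} of [max{0, 1 − y·⟨w, x⟩} − λ·(‖x − x̂_i‖ + κ·𝟙{y ≠ ŷ_i})] ≤ α_i; (b) α ∈ ℝ₊^N and for every i there exist π_i⁺, π_i⁻, τ_i⁺, τ_i⁻ ∈ ℝ₊^n with: 1 + ⟨−ŷ_i·w − π_i⁺ + τ_i⁺, x̂_i⟩ + ⟨π_i⁺, e⟩ ≤ α_i; 1 + ⟨ŷ_i·w − π_i⁻ + τ_i⁻, x̂_i⟩ + ⟨π_i⁻, e⟩ − κλ ≤ α_i; ‖π_i⁺ − τ_i⁺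 + ŷ_i·w‖_* ≤ λ; and ‖π_i⁻ − τ_i⁻ − ŷ_i·w‖_* ≤ λ. -/
/-!
For a fixed sample, the only labels are `ŷ` and `-ŷ`, so the hinge loss is bounded exactly when
`α ≥ 0` (take `x = x̂`, `y = ŷ`) and `⟨∓ŷ • w, x⟩ - λ ‖x - x̂‖` is suitably bounded over the box.
A bound `⟨v, x⟩ - λ ‖x - x̂‖ ≤ β` on the box says that the affine function `⟨v, ·⟩ - β` lies below
the sublinear `λ ‖· - x̂‖` there, so Hahn–Banach puts a linear functional `a` in between: `a` has
dual norm at most `λ`, and `⟨v - a, x⟩ ≤ β - ⟨a, x̂⟩` on the box. The latter is a bound on the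
support function of the box, certified by splitting `v - a = π - τ` into positive and negative
parts.
-/

open scoped Matrix

section SublinearDuality

open scoped Pointwise

variable {E : Type*} [AddCommGroup E] [Module ℝ E]

/-- The cone of pairs `(x, t)` with `N (x + y) ≤ t + s` for some `(y, s)` in the cone spanned by
`C`. When `C` is the hypograph of a concave `h`, the functionals `(x, t) ↦ t - g x` that are
nonnegative on it are given by the linear `g` with `h ≤ g ≤ N`. -/
def sandwichCone {N : E → ℝ} (N_hom : ∀ k : ℝ, 0 ≤ k → ∀ x, N (k • x) = k * N x)
    (N_add : ∀ x y, N (x + y) ≤ N x + N y) {C : Set (E × ℝ)} (hC : Convex ℝ C)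
    (hne : C.Nonempty) : PointedCone ℝ (E × ℝ) where
  carrier := {w | ∃ k : ℝ, 0 ≤ k ∧ ∃ q ∈ k • C, N (w.1 + q.1) ≤ w.2 + q.2}
  zero_mem' := by
    have N_zero : N 0 = 0 := by simpa using N_hom 0 le_rfl 0
    exact ⟨0, le_rfl, 0, by simp [Set.zero_smul_set hne], by simp [N_zero]⟩
  add_mem' := by
    rintro v w ⟨k, hk, q, hq, hv⟩ ⟨l, hl, r, hr, hw⟩
    refine ⟨k + l, add_nonneg hk hl, q + r, hC.add_smul hk hl ▸ Set.add_mem_add hq hr, ?_⟩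
    calc N ((v + w).1 + (q + r).1) = N ((v.1 + q.1) + (w.1 + r.1)) := by
          rw [Prod.fst_add, Prod.fst_add, add_add_add_comm]
      _ ≤ N (v.1 + q.1) + N (w.1 + r.1) := N_add _ _
      _ ≤ (v.2 + q.2) + (w.2 + r.2) := add_le_add hv hw
      _ = (v + w).2 + (q + r).2 := add_add_add_comm _ _ _ _
  smul_mem' := by
    rintro ⟨a, ha⟩ w ⟨k, hk, q, hq, hw⟩
    refine ⟨a * k, mul_nonneg ha hk, a • q, mul_smul a k C ▸ Set.smul_mem_smul_set hq, ?_⟩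
    calc N (a • w.1 + a • q.1) = a * N (w.1 + q.1) := by rw [← smul_add, N_hom a ha]
      _ ≤ a * (w.2 + q.2) := mul_le_mul_of_nonneg_left hw ha
      _ = a * w.2 + a * q.2 := mul_add _ _ _

theorem exists_linear_between_of_concaveOn_of_sublinear {N h : E → ℝ} {K : Set E}
    (N_hom : ∀ k : ℝ, 0 ≤ k → ∀ x, N (k • x) = k * N x)
    (N_add : ∀ x y, N (x + y) ≤ N x + N y)
    (hh : ConcaveOn ℝ K h) (hK : K.Nonempty) (hle : ∀ x ∈ K, h x ≤ N x) :
    ∃ g : E →ₗ[ℝ] ℝ, (∀ x, g x ≤ N x) ∧ ∀ x ∈ K, h x ≤ g x := by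
  have N_zero : N 0 = 0 := by simpa using N_hom 0 le_rfl 0
  have hne : {q : E × ℝ | q.1 ∈ K ∧ q.2 ≤ h q.1}.Nonempty :=
    hK.elim fun x hx => ⟨(x, h x), hx, le_rfl⟩
  let S := sandwichCone N_hom N_add hh.convex_hypograph hne
  have epigraph_mem (x : E) : (x, N x) ∈ S :=
    ⟨0, le_rfl, 0, by simp [Set.zero_smul_set hne], by simp⟩
  have neg_hypograph_mem {x : E} (hx : x ∈ K) : (-x, -h x) ∈ S :=
    ⟨1, zero_le_one, (x, h x), by simpa using hx, by simp [N_zero]⟩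
  have nonneg_of_mem {t : ℝ} : ((0 : E), t) ∈ S → 0 ≤ t := by
    rintro ⟨k, hk, _, ⟨q, ⟨hqK, hqh⟩, rfl⟩, ht⟩
    refine nonneg_of_le_add_left (b := k * q.2) ?_
    calc k * q.2 ≤ k * N q.1 := mul_le_mul_of_nonneg_left (hqh.trans (hle _ hqK)) hk
      _ = N (0 + k • q.1) := by rw [zero_add, N_hom k hk]
      _ ≤ t + k * q.2 := ht
  obtain ⟨F, F_eq, F_nonneg⟩ := riesz_extension S
    ((LinearMap.snd ℝ E ℝ).toPMap ((⊥ : Submodule ℝ E).prod ⊤))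
    (by
      rintro ⟨⟨x, t⟩, hx, _⟩ hxt
      obtain rfl : x = 0 := hx
      exact nonneg_of_mem hxt)
    (fun ⟨x, t⟩ => ⟨⟨(0, N x - t), rfl, trivial⟩, by simpa using epigraph_mem x⟩)
  have F_apply (x : E) (t : ℝ) : F (x, t) = t + F (x, 0) := by
    have F_snd : F (0, t) = t := F_eq ⟨(0, t), rfl, trivial⟩
    rw [← F_snd, ← map_add, F_snd, Prod.mk_add_mk, zero_add, add_zero]
  refine ⟨-(F ∘ₗ LinearMap.inl ℝ E ℝ), fun x => ?_, fun x hx => ?_⟩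
  · have := F_nonneg _ (epigraph_mem x)
    rw [F_apply] at this
    exact neg_le_iff_add_nonneg.2 this
  · have := F_nonneg _ (neg_hypograph_mem hx)
    rw [← Prod.neg_mk, map_neg, F_apply, neg_nonneg] at this
    exact le_neg_iff_add_nonpos_right.2 this

theorem isLUB_image_unitBall_le_iff (p : Seminorm ℝ E) (f : E →ₗ[ℝ] ℝ) {d r : ℝ}
    (hd : IsLUB {ρ : ℝ | ∃ u, p u ≤ 1 ∧ ρ = f u} d) (hr : 0 ≤ r) :
    d ≤ r ↔ ∀ z, f z ≤ r * p z := by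
  rw [isLUB_le_iff hd]
  constructor
  · refine fun h z => le_mul_of_forall_lt₀ fun s hs t ht => ?_
    have ht0 : 0 < t := (apply_nonneg p z).trans_lt ht
    have hball : p (t⁻¹ • z) ≤ 1 := by
      rw [map_smul_eq_mul, Real.norm_of_nonneg (inv_nonneg.2 ht0.le)]
      exact inv_mul_le_one_of_le₀ ht.le ht0.le
    have hfz : t⁻¹ * f z ≤ r := by simpa using h ⟨_, hball, rfl⟩
    calc f z ≤ t * r := (inv_mul_le_iff₀ ht0).1 hfz
      _ = r * t := mul_comm t r
      _ ≤ s * t := mul_le_mul_of_nonneg_right hs.le ht0.le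
  · rintro h _ ⟨u, hu, rfl⟩
    exact (h u).trans (mul_le_of_le_one_right hr hu)

theorem forall_sub_seminorm_le_iff_exists_linear (p : Seminorm ℝ E) {K : Set E} (hK : Convex ℝ K)
    {c : E} (hc : c ∈ K) (f : E →ₗ[ℝ] ℝ) {r : ℝ} (hr : 0 ≤ r) (β : ℝ) :
    (∀ x ∈ K, f x - r * p (x - c) ≤ β) ↔
      ∃ g : E →ₗ[ℝ] ℝ, (∀ z, g z ≤ r * p z) ∧ ∀ x ∈ K, (f - g) x ≤ β - g c := by
  constructor
  · intro h
    obtain ⟨g, hgp, hg⟩ := exists_linear_between_of_concaveOn_of_sublinear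
      (N := fun z => r * p z) (h := fun z => f z + (f c - β)) (K := (fun z => c + z) ⁻¹' K)
      (fun k hk x => by rw [map_smul_eq_mul, Real.norm_of_nonneg hk, mul_left_comm])
      (fun x y => (mul_le_mul_of_nonneg_left (map_add_le_add p x y) hr).trans_eq (mul_add _ _ _))
      ((f.concaveOn (hK.translate_preimage_right c)).add_const _) ⟨0, by simpa using hc⟩
      (fun z hz => by
        have := h (c + z) hz
        rw [map_add, add_sub_cancel_left] at this
        linarith)
    refine ⟨g, hgp, fun x hx => ?_⟩
    have := hg (x - c) (by simpa using hx)
    rw [map_sub, map_sub] at this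
    rw [LinearMap.sub_apply]
    linarith
  · rintro ⟨g, hgp, hg⟩ x hx
    have := hgp (x - c)
    rw [map_sub] at this
    linarith [hg x hx, LinearMap.sub_apply f g x]

end SublinearDuality

section Box

variable {ι : Type*} [Fintype ι]

theorem forall_mem_Icc_dotProduct_le_iff {l u : ι → ℝ} (hlu : l ≤ u) (a : ι → ℝ) (γ : ℝ) :
    (∀ x ∈ Set.Icc l u, a ⬝ᵥ x ≤ γ) ↔
      ∃ π τ : ι → ℝ, 0 ≤ π ∧ 0 ≤ τ ∧ a = π - τ ∧ π ⬝ᵥ u - τ ⬝ᵥ l ≤ γ := by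
  constructor
  · intro h
    refine ⟨a⁺, a⁻, posPart_nonneg a, negPart_nonneg a, (posPart_sub_negPart a).symm, ?_⟩
    let x : ι → ℝ := fun j => if 0 ≤ a j then u j else l j
    have hx : x ∈ Set.Icc l u := by
      have hxj (j : ι) : x j ∈ Set.Icc (l j) (u j) :=
        ite_mem.2 ⟨fun _ => Set.right_mem_Icc.2 (hlu j), fun _ => Set.left_mem_Icc.2 (hlu j)⟩
      exact ⟨fun j => (hxj j).1, fun j => (hxj j).2⟩
    have attains : a⁺ ⬝ᵥ u - a⁻ ⬝ᵥ l = a ⬝ᵥ x := by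
      simp only [dotProduct, ← Finset.sum_sub_distrib]
      refine Finset.sum_congr rfl fun j _ => ?_
      by_cases hj : 0 ≤ a j
      · simp [x, hj]
      · simp [x, hj, (not_le.1 hj).le]
    exact attains.trans_le (h x hx)
  · rintro ⟨π, τ, hπ, hτ, rfl, h⟩ x ⟨hlx, hxu⟩
    rw [sub_dotProduct]
    linarith [dotProduct_le_dotProduct_of_nonneg_left hxu hπ,
      dotProduct_le_dotProduct_of_nonneg_left hlx hτ]

theorem forall_mem_Icc_dotProduct_sub_seminorm_le_iff (p : Seminorm ℝ (ι → ℝ)) {l u c : ι → ℝ}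
    (hc : c ∈ Set.Icc l u) (v : ι → ℝ) {r : ℝ} (hr : 0 ≤ r) (β : ℝ) :
    (∀ x ∈ Set.Icc l u, v ⬝ᵥ x - r * p (x - c) ≤ β) ↔
      ∃ π τ : ι → ℝ, 0 ≤ π ∧ 0 ≤ τ ∧ (v - π + τ) ⬝ᵥ c + π ⬝ᵥ u - τ ⬝ᵥ l ≤ β ∧
        ∀ z, (π - τ - v) ⬝ᵥ z ≤ r * p z := by
  classical
  have exists_linear := forall_sub_seminorm_le_iff_exists_linear p (convex_Icc l u) hc
    (dotProductEquiv ℝ ι v) hr β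
  simp only [(dotProductEquiv ℝ ι).surjective.exists, ← map_sub, dotProductEquiv_apply_apply,
    forall_mem_Icc_dotProduct_le_iff (hc.1.trans hc.2)] at exists_linear
  refine exists_linear.trans ⟨?_, ?_⟩
  · rintro ⟨a, ha, π, τ, hπ, hτ, hva, hβ⟩
    refine ⟨π, τ, hπ, hτ, ?_, fun z => ?_⟩
    · rw [sub_add, ← hva, sub_sub_cancel]
      linarith
    · have := ha (-z)
      rwa [map_neg_eq_map, dotProduct_neg, ← neg_dotProduct, ← sub_sub_cancel_left v a, hva] at this
  · rintro ⟨π, τ, hπ, hτ, hβ, hdual⟩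
    refine ⟨v - π + τ, fun z => ?_, π, τ, hπ, hτ, by abel, by linarith⟩
    have := hdual (-z)
    rwa [map_neg_eq_map, dotProduct_neg, ← neg_dotProduct, neg_sub, ← sub_add] at this

end Box

section HingeLoss

theorem forall_sign_iff {y₀ : ℝ} (hy₀ : y₀ = 1 ∨ y₀ = -1) (P : ℝ → Prop) :
    (∀ y, y = 1 ∨ y = -1 → P y) ↔ P y₀ ∧ P (-y₀) := by
  rcases hy₀ with rfl | rfl <;> simp [and_comm]

theorem forall_hinge_sub_cost_le_iff {E : Type*} [AddCommGroup E] [Module ℝ E] (p : Seminorm ℝ E)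
    {K : Set E} {c : E} (hc : c ∈ K) (f : E → ℝ) {κ r : ℝ} (hκ : 0 ≤ κ) (hr : 0 ≤ r)
    {y₀ : ℝ} (hy₀ : y₀ = 1 ∨ y₀ = -1) (α : ℝ) :
    (∀ x ∈ K, ∀ y : ℝ, y = 1 ∨ y = -1 →
        max 0 (1 - y * f x) - r * (p (x - c) + κ * if y = y₀ then 0 else 1) ≤ α) ↔
      0 ≤ α ∧ (∀ x ∈ K, -y₀ * f x - r * p (x - c) ≤ α - 1) ∧
        ∀ x ∈ K, y₀ * f x - r * p (x - c) ≤ α - 1 + κ * r := by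
  have hflip : -y₀ ≠ y₀ := by rcases hy₀ with rfl | rfl <;> norm_num
  simp only [forall_sign_iff hy₀, if_neg hflip, if_true, sub_le_iff_le_add, max_le_iff]
  constructor
  · intro h
    refine ⟨by simpa using (h c hc).1.1, fun x hx => ?_, fun x hx => ?_⟩
    · linarith [(h x hx).1.2]
    · linarith [(h x hx).2.2]
  · rintro ⟨hα, hsame, hflipped⟩ x hx
    have hp : 0 ≤ r * p (x - c) := mul_nonneg hr (apply_nonneg p _)
    have hκr : 0 ≤ r * κ := mul_nonneg hr hκ
    refine ⟨⟨?_, ?_⟩, ?_, ?_⟩ <;> linarith [hsame x hx, hflipped x hx]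

end HingeLoss

/-- Proposition (SVM - Special Case 2) of the paper: characterization of `(λ, α, w) ∈ Ω_s`
for distributionally robust SVM with hinge loss, feature support set `X = [0, 1]^n`, and
classification transport cost `d_C((x,y),(x',y')) = ‖x − x'‖ + κ·𝟙{y ≠ y'}` on
`ℝ^n × {−1, +1}`. Here `nn` is a norm on `ℝ^n` and `dn` is its dual norm. -/
theorem drfl_svm_box_case2_omega
    (n N : ℕ) (κ : ℝ) (hκ : 0 < κ)
    (nn : (Fin n → ℝ) → ℝ)
    (hnn_nonneg : ∀ x, 0 ≤ nn x)
    (hnn_def : ∀ x, nn x = 0 ↔ x = 0)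
    (hnn_add : ∀ x y, nn (x + y) ≤ nn x + nn y)
    (hnn_smul : ∀ (c : ℝ) x, nn (c • x) = |c| * nn x)
    (dn : (Fin n → ℝ) → ℝ)
    (hdn : ∀ v, IsLUB {ρ : ℝ | ∃ u, nn u ≤ 1 ∧ ρ = ∑ j, v j * u j} (dn v))
    (xhat : Fin N → Fin n → ℝ) (hdata : ∀ i j, 0 ≤ xhat i j ∧ xhat i j ≤ 1)
    (yhat : Fin N → ℝ) (hyhat : ∀ i, yhat i = 1 ∨ yhat i = -1)
    (lam : ℝ) (hlam : 0 ≤ lam) (α : Fin N → ℝ) (w : Fin n → ℝ) :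
    (∀ i, ∀ x : Fin n → ℝ, (∀ j, 0 ≤ x j ∧ x j ≤ 1) →
        ∀ y : ℝ, (y = 1 ∨ y = -1) →
        max 0 (1 - y * ∑ j, w j * x j)
          - lam * (nn (x - xhat i) + κ * (if y = yhat i then 0 else 1)) ≤ α i)
    ↔
    ((∀ i, 0 ≤ α i) ∧ ∀ i, ∃ πp πm τp τm : Fin n → ℝ,
      (∀ j, 0 ≤ πp j) ∧ (∀ j, 0 ≤ πm j) ∧ (∀ j, 0 ≤ τp j) ∧ (∀ j, 0 ≤ τm j) ∧
      1 + (∑ j, (-(yhat i) * w j - πp j + τp j) * xhat i j) + (∑ j, πp j) ≤ α i ∧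
      1 + (∑ j, (yhat i * w j - πm j + τm j) * xhat i j) + (∑ j, πm j)
        - κ * lam ≤ α i ∧
      dn (fun j => πp j - τp j + yhat i * w j) ≤ lam ∧
      dn (fun j => πm j - τm j - yhat i * w j) ≤ lam) := by
  let p : Seminorm ℝ (Fin n → ℝ) := Seminorm.of nn hnn_add hnn_smul
  have mem_box (x : Fin n → ℝ) : (∀ j, 0 ≤ x j ∧ x j ≤ 1) ↔ x ∈ Set.Icc 0 1 := forall_and
  have dual_le_iff (v : Fin n → ℝ) : dn v ≤ lam ↔ ∀ z, v ⬝ᵥ z ≤ lam * p z :=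
    isLUB_image_unitBall_le_iff p (dotProductBilin ℝ ℝ v) (hdn v) hlam
  have box_iff (i : Fin N) (s β : ℝ) :
      (∀ x ∈ Set.Icc 0 1, s * w ⬝ᵥ x - lam * p (x - xhat i) ≤ β) ↔
        ∃ π τ : Fin n → ℝ, (∀ j, 0 ≤ π j) ∧ (∀ j, 0 ≤ τ j) ∧
          ∑ j, (s * w j - π j + τ j) * xhat i j + ∑ j, π j ≤ β ∧
          dn (fun j => π j - τ j - s * w j) ≤ lam := by
    have := forall_mem_Icc_dotProduct_sub_seminorm_le_iff p ((mem_box _).1 (hdata i)) (s • w)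
      hlam β
    simp only [← dual_le_iff, smul_dotProduct, dotProduct_one, dotProduct_zero, sub_zero] at this
    exact this
  have hinge_iff (i : Fin N) :=
    forall_hinge_sub_cost_le_iff p ((mem_box _).1 (hdata i)) (w ⬝ᵥ ·) hκ.le hlam (hyhat i) (α i)
  simp only [box_iff] at hinge_iff
  simp only [← forall_and, mem_box]
  refine forall_congr' fun i => (hinge_iff i).trans (and_congr_right fun _ => ⟨?_, ?_⟩)
  · rintro ⟨⟨πp, τp, hπp, hτp, hp, hdp⟩, πm, τm, hπm, hτm, hm, hdm⟩
    exact ⟨πp, πm, τp, τm, hπp, hπm, hτp, hτm, by linarith, by linarith, by simpa using hdp, hdm⟩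
  · rintro ⟨πp, πm, τp, τm, hπp, hπm, hτp, hτm, hp, hm, hdp, hdm⟩
    exact ⟨⟨πp, τp, hπp, hτp, by linarith, by simpa using hdp⟩, πm, τm, hπm, hτm, by linarith, hdm⟩
end
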